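/- Let $G$ be a weighted graph on a finite vertex set $V$ with weighted adjacency matrix $A$, let $v \in V$, and let $H$ be a subgraph of $G$ that is connected and sesquivalent (i.e., $H$ is a single edge or a cycle of $G$) with $v \in V(H)$. If $H$ is the only connected sesquivalent subgraph of $G$ whose vertex set contains $v$, then $\det A(G) = \det A(H) \cdot \det A(G - H)$, where $A(H)$ is the weighted adjacency matrix of $H$ (with weights inherited from $G$) and $A(G - H)$ is the principal submatrix of $A$ obtained by deleting all rows and columns indexed by vertices of $H$. -/

import Mathlib

open Finset

variable {V : Type*}

/-- The degree of a vertex `v` in the (sub)graph given by the edge set `H`. -/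
def edgeDeg [Fintype V] [DecidableEq V] (H : Finset (Sym2 V)) (v : V) : ℕ :=
  (H.filter (fun e => v ∈ e)).card

/-- `H` (a finite set of edges, i.e. of unordered pairs of vertices) is a connected
sesquivalent subgraph of the weighted graph with edge-weight function `w`: it is
nonempty, all its edges are genuine edges of the graph (non-loops of nonzero weight),
every vertex it covers has degree 1 or 2 in `H`, no degree-1 vertex is adjacent (in `H`)
to a degree-2 vertex, and any two covered vertices are joined by a path in `H`.
Equivalently, `H` is a single edge (`K₂`) of `G` or a cycle in `G`. -/
def IsConnectedSesquivalent [Fintype V] [DecidableEq V]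
    (w : Sym2 V → ℝ) (H : Finset (Sym2 V)) : Prop :=
  H.Nonempty ∧
  (∀ e ∈ H, ¬ e.IsDiag ∧ w e ≠ 0) ∧
  (∀ v : V, (∃ e ∈ H, v ∈ e) → edgeDeg H v = 1 ∨ edgeDeg H v = 2) ∧
  (∀ u v : V, s(u, v) ∈ H → edgeDeg H u = 1 → edgeDeg H v = 1) ∧
  (∀ u v : V, (∃ e ∈ H, u ∈ e) → (∃ e ∈ H, v ∈ e) →
    (SimpleGraph.fromEdgeSet (↑H : Set (Sym2 V))).Reachable u v)

/-!
An edge is by itself a connected sesquivalent subgraph, so uniqueness forces `H` to be the only edge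
`vu` at `v`: the vertex `v` is pendant. Since column `v` of `A` vanishes outside row `u`, expanding
along it shows that the other entries of row `u` do not affect `det A`. Once they are replaced
by `0`, the matrix splits into the block of the edge `vu` and the block of the remaining vertices.
-/

section Pendant

variable {R : Type*} [CommRing R] [Fintype V] [DecidableEq V]

theorem det_eq_det_updateRow_single (A : Matrix V V R) {i j : V} (h : ∀ k ≠ i, A k j = 0) :
    A.det = (A.updateRow i (Pi.single j (A i j))).det :=
  calc
    A.det = ∑ k, A k j * A.adjugate j k := A.det_eq_sum_mul_adjugate_col j
    _ = A i j * A.adjugate j i := Fintype.sum_eq_single i fun k hk => by rw [h k hk, zero_mul]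
    _ = (A.updateRow i (Pi.single j (A i j))).det := by
      rw [Matrix.adjugate_apply, ← Matrix.det_updateRow_smul, ← Pi.single_smul', smul_eq_mul,
        mul_one]

theorem det_eq_det_edge_mul_det_compl_of_pendant (A : Matrix V V R) {v u : V} (hvu : v ≠ u)
    (hrow : ∀ x ≠ u, A v x = 0) (hcol : ∀ x ≠ u, A x v = 0)
    (p : V → Prop) [DecidablePred p] (hp : ∀ x, p x ↔ x ∈ s(v, u)) :
    A.det =
      Matrix.det (Matrix.of fun a b : {x // p x} =>
        if s(a.1, b.1) = s(v, u) then A a.1 b.1 else 0) *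
      Matrix.det (Matrix.of fun a b : {x // ¬p x} => A a.1 b.1) := by
  set B := A.updateRow u (Pi.single v (A u v)) with hB
  have hBv : ∀ x, B v x = A v x := fun x => by simp [hB, hvu]
  have hBu : ∀ x ≠ v, B u x = 0 := fun x hx => by simp [hB, hx]
  have hsplit : ∀ i, p i → ∀ j, ¬p j → B i j = 0 := by
    intro i hi j hj
    obtain ⟨hjv, hju⟩ : j ≠ v ∧ j ≠ u := by simpa [hp] using hj
    obtain rfl | rfl := Sym2.mem_iff.mp ((hp i).mp hi)
    · rw [hBv, hrow j hju]
    · exact hBu j hjv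
  rw [det_eq_det_updateRow_single A hcol, ← hB, B.twoBlockTriangular_det' p hsplit]
  congr 2
  · ext ⟨a, ha⟩ ⟨b, hb⟩
    obtain rfl | rfl := Sym2.mem_iff.mp ((hp a).mp ha) <;>
      obtain rfl | rfl := Sym2.mem_iff.mp ((hp b).mp hb) <;>
      simp [Matrix.toSquareBlockProp_def, hB, hvu, hvu.symm, hrow]
  · ext ⟨a, ha⟩ ⟨b, hb⟩
    have hau : a ≠ u := by
      rintro rfl
      exact ha ((hp a).mpr (Sym2.mem_mk_right v a))
    simp [Matrix.toSquareBlockProp_def, hB, hau]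

end Pendant

section Sesquivalent

variable [Fintype V] [DecidableEq V] {w : Sym2 V → ℝ} {u v : V}

theorem edgeDeg_singleton_of_mem {e : Sym2 V} (hv : v ∈ e) : edgeDeg {e} v = 1 := by
  simp [edgeDeg, Finset.filter_singleton, hv]

theorem isConnectedSesquivalent_singleton (huv : u ≠ v) (hw : w s(u, v) ≠ 0) :
    IsConnectedSesquivalent w {s(u, v)} := by
  have hadj : (SimpleGraph.fromEdgeSet {s(u, v)}).Adj u v := by simp [huv]
  refine ⟨singleton_nonempty _, by simpa [huv] using hw, ?_, ?_, ?_⟩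
  · rintro x ⟨e, he, hx⟩
    rw [mem_singleton.mp he] at hx
    exact Or.inl (edgeDeg_singleton_of_mem hx)
  · intro x y hxy _
    exact edgeDeg_singleton_of_mem (mem_singleton.mp hxy ▸ Sym2.mem_mk_right x y)
  · simp only [mem_singleton, exists_eq_left, coe_singleton]
    intro x y hx hy
    obtain rfl | rfl := Sym2.mem_iff.mp hx <;> obtain rfl | rfl := Sym2.mem_iff.mp hy
    exacts [.rfl, hadj.reachable, hadj.symm.reachable, .rfl]

theorem exists_eq_singleton_of_unique_isConnectedSesquivalent {H : Finset (Sym2 V)}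
    (hH : IsConnectedSesquivalent w H) (hvH : ∃ e ∈ H, v ∈ e)
    (huniq : ∀ H' : Finset (Sym2 V),
      IsConnectedSesquivalent w H' → (∃ e ∈ H', v ∈ e) → H' = H) :
    ∃ u, v ≠ u ∧ H = {s(v, u)} ∧ ∀ x, v ≠ x → x ≠ u → w s(v, x) = 0 := by
  have eq_edge : ∀ x, v ≠ x → w s(v, x) ≠ 0 → {s(v, x)} = H := fun x hvx hx =>
    huniq _ (isConnectedSesquivalent_singleton hvx hx)
      ⟨_, mem_singleton_self _, Sym2.mem_mk_left v x⟩
  obtain ⟨e, he, hve⟩ := hvH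
  obtain ⟨u, rfl⟩ := Sym2.mem_iff_exists.mp hve
  obtain ⟨hdiag, hvu⟩ := hH.2.1 _ he
  have hne : v ≠ u := mt Sym2.mk_isDiag_iff.mpr hdiag
  have hHu := eq_edge u hne hvu
  refine ⟨u, hne, hHu.symm, fun x hvx hxu => ?_⟩
  by_contra hx
  exact hxu (Sym2.congr_right.mp (singleton_injective ((eq_edge x hvx hx).trans hHu.symm)))

end Sesquivalent

-- `w` serves only to specify the graph, as its support; it is real since `IsConnectedSesquivalent`
-- takes real weights.
theorem det_eq_det_unique_sesquivalent_mul_general {R : Type*} [CommRing R] [Fintype V]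
    [DecidableEq V] (A : Matrix V V R) (w : Sym2 V → ℝ)
    (hw : ∀ x y : V, x ≠ y → w s(x, y) = 0 → A x y = 0)
    (v : V) (hv : A v v = 0) (H : Finset (Sym2 V))
    (hH : IsConnectedSesquivalent w H) (hvH : ∃ e ∈ H, v ∈ e)
    (huniq : ∀ H' : Finset (Sym2 V),
      IsConnectedSesquivalent w H' → (∃ e ∈ H', v ∈ e) → H' = H) :
    A.det =
      Matrix.det (Matrix.of fun a b : {u : V // ∃ e ∈ H, u ∈ e} =>
        if s(a.1, b.1) ∈ H then A a.1 b.1 else 0) *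
      Matrix.det (Matrix.of fun a b : {u : V // ¬ ∃ e ∈ H, u ∈ e} => A a.1 b.1) := by
  obtain ⟨u, hvu, rfl, hother⟩ :=
    exists_eq_singleton_of_unique_isConnectedSesquivalent hH hvH huniq
  have hrow : ∀ x ≠ u, A v x = 0 := fun x hxu => by
    obtain rfl | hvx := eq_or_ne v x
    · exact hv
    · exact hw v x hvx (hother x hvx hxu)
  have hcol : ∀ x ≠ u, A x v = 0 := fun x hxu => by
    obtain rfl | hvx := eq_or_ne v x
    · exact hv
    · exact hw x v hvx.symm (Sym2.eq_swap ▸ hother x hvx hxu)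
  simpa only [mem_singleton] using
    det_eq_det_edge_mul_det_compl_of_pendant A hvu hrow hcol
      (fun x => ∃ e ∈ ({s(v, u)} : Finset (Sym2 V)), x ∈ e) (by simp)

/-- **Corollary 2**.  Let `G` be a weighted graph on a finite vertex set `V` with
weighted adjacency matrix `A` (symmetric, zero diagonal) and edge-weight function `w`
(so `w s(u,v) = A u v`).  Let `v ∈ V` and let `H` be a connected sesquivalent subgraph
of `G` (a single edge or a cycle) whose vertex set contains `v`.  If `H` is the *only*
connected sesquivalent subgraph of `G` whose vertex set contains `v`, then
`det A(G) = det A(H) * det A(G - H)`, where `A(H)` is the weighted adjacency matrix of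
`H` (indexed by the vertices covered by `H`, with weights inherited from `G`) and
`A(G - H)` is the principal submatrix of `A` on the vertices not covered by `H`. -/
theorem det_eq_det_unique_sesquivalent_mul {V : Type*} [Fintype V] [DecidableEq V]
    (A : Matrix V V ℝ)
    (hsym : ∀ u v : V, A u v = A v u) (hdiag : ∀ v : V, A v v = 0)
    (w : Sym2 V → ℝ) (hw : ∀ u v : V, w s(u, v) = A u v)
    (v : V) (H : Finset (Sym2 V))
    (hH : IsConnectedSesquivalent w H) (hvH : ∃ e ∈ H, v ∈ e)
    (huniq : ∀ H' : Finset (Sym2 V),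
      IsConnectedSesquivalent w H' → (∃ e ∈ H', v ∈ e) → H' = H) :
    A.det =
      Matrix.det (Matrix.of fun a b : {u : V // ∃ e ∈ H, u ∈ e} =>
        if s(a.1, b.1) ∈ H then A a.1 b.1 else 0) *
      Matrix.det (Matrix.of fun a b : {u : V // ¬ ∃ e ∈ H, u ∈ e} => A a.1 b.1) :=
  det_eq_det_unique_sesquivalent_mul_general A w (fun x y _ hxy => hw x y ▸ hxy) v (hdiag v) H
    hH hvH huniq
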